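/- Let p ∈ (0,1/2], r ∈ ℕ and δ > 0. Suppose f : {0,1}^n → ℝ has degree at most r (i.e. f̂(S) = 0 whenever |S| > r) and I_S(f) ≤ δ for all S ⊆ [n] with |S| ≤ r. Then ‖f‖₄ ≤ 5^{3r/4}·δ^{1/4}·‖f‖₂^{1/2}. -/

import Mathlib

open Finset

namespace GlobalHC

variable {n : ℕ}

/-- Expectation with respect to the `p`-biased measure on `{0,1}^n`. -/
noncomputable def Ep (p : ℝ) (f : (Fin n → Bool) → ℝ) : ℝ :=
  ∑ x : Fin n → Bool, (∏ i, if x i then p else 1 - p) * f x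

/-- The `r`-norm with respect to the `p`-biased measure. -/
noncomputable def pnorm (p r : ℝ) (f : (Fin n → Bool) → ℝ) : ℝ :=
  (Ep p fun x => |f x| ^ r) ^ (1 / r)

/-- The `p`-biased character `χ_S`. -/
noncomputable def chi (p : ℝ) (S : Finset (Fin n)) (x : Fin n → Bool) : ℝ :=
  ∏ i ∈ S, ((if x i then (1 : ℝ) else 0) - p) / Real.sqrt (p * (1 - p))

/-- The `p`-biased Fourier coefficient `f̂(S)`. -/
noncomputable def coeff (p : ℝ) (f : (Fin n → Bool) → ℝ) (S : Finset (Fin n)) : ℝ :=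
  Ep p fun x => f x * chi p S x

/-- The derivative `D_S f = Σ_{T ⊇ S} f̂(T) χ_{T∖S}`. -/
noncomputable def derivS (p : ℝ) (S : Finset (Fin n)) (f : (Fin n → Bool) → ℝ) :
    (Fin n → Bool) → ℝ :=
  fun x => ∑ T ∈ Finset.univ.filter (fun T => S ⊆ T), coeff p f T * chi p (T \ S) x

/-- The generalised influence `I_S(f) = σ^{-2|S|} Σ_{T ⊇ S} f̂(T)²`. -/
noncomputable def genInf (p : ℝ) (S : Finset (Fin n)) (f : (Fin n → Bool) → ℝ) : ℝ :=
  (∑ T ∈ Finset.univ.filter (fun T => S ⊆ T), coeff p f T ^ 2) / (p * (1 - p)) ^ S.card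

/-- The noise operator `T_ρ f = Σ_S ρ^{|S|} f̂(S) χ_S`. -/
noncomputable def noise (p ρ : ℝ) (f : (Fin n → Bool) → ℝ) : (Fin n → Bool) → ℝ :=
  fun x => ∑ S : Finset (Fin n), ρ ^ S.card * coeff p f S * chi p S x

/-- The degree-`r` truncation `f^{≤ r}`. -/
noncomputable def trunc (p : ℝ) (r : ℕ) (f : (Fin n → Bool) → ℝ) : (Fin n → Bool) → ℝ :=
  fun x => ∑ S ∈ Finset.univ.filter (fun S : Finset (Fin n) => S.card ≤ r),
    coeff p f S * chi p S x

/-- The restriction `f_{J→1}` setting all coordinates in `J` to `1`. -/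
def restrict1 (J : Finset (Fin n)) (f : (Fin n → Bool) → ℝ) : (Fin n → Bool) → ℝ :=
  fun x => f (fun i => if i ∈ J then true else x i)

/-- `f` is `(r,δ)`-global (for the `p`-biased measure). -/
def IsGlobal (p r δ : ℝ) (f : (Fin n → Bool) → ℝ) : Prop :=
  ∀ J : Finset (Fin n), (J.card : ℝ) ≤ r → Ep p (restrict1 J f) ≤ Ep p f + δ

/-- The total influence `I[f] = Σ_i Pr_{μ_p}[f(x ⊕ e_i) ≠ f(x)]`. -/
noncomputable def totalInf (p : ℝ) (f : (Fin n → Bool) → ℝ) : ℝ :=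
  ∑ i : Fin n, Ep p fun x => if f (Function.update x i (!x i)) = f x then 0 else 1

/-- Noise stability `Stab_ρ(f) = Σ_S ρ^{|S|} f̂(S)²` (w.r.t. `μ_p`). -/
noncomputable def stab (p ρ : ℝ) (f : (Fin n → Bool) → ℝ) : ℝ :=
  ∑ S : Finset (Fin n), ρ ^ S.card * coeff p f S ^ 2

/-- `f` is monotone. -/
def Mono (f : (Fin n → Bool) → ℝ) : Prop :=
  ∀ x y : Fin n → Bool, (∀ i, x i ≤ y i) → f x ≤ f y

/-!
Write `σ² = p (1 - p)`. A single biased coordinate `φ` satisfies `φ² = 1 + γ φ` with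
`γ² + 4 = σ⁻²`, so the only effect of the bias is a skewness of size at most `σ⁻¹`. Damping by
`ρ = 1/2` absorbs it: for constants `a, b, c, d`,
`𝔼 (a + φ b / 2)² (c + φ d / 2)² ≤ a² c² + a² d² + b² c² + σ⁻² b² d²`.
Adding one coordinate at a time, this tensorises to
`‖T_{1/2} f‖₄⁴ ≤ ∑_S σ^{2|S|} I_S(f)²`; the induction needs the bilinear form `𝔼 F² G²`, because
splitting off a coordinate from `f = a + φ b` produces the mixed term `𝔼 a² b²`.

For `f` of degree at most `r`, apply this to `T_2 f`. Passing from `f` to `T_2 f` costs a factor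
`4 ^ r` in each influence, and `∑_S σ^{2|S|} I_S(f) ≤ 2 ^ r ‖f‖₂²`, so `‖f‖₄⁴ ≤ 32 ^ r δ ‖f‖₂²`,
and `32 ≤ 5³`.
-/

section Expectation

lemma Ep_const_mul (p c : ℝ) (f : (Fin n → Bool) → ℝ) :
    Ep p (fun x => c * f x) = c * Ep p f := by
  simp only [Ep, mul_sum, mul_left_comm c]

lemma Ep_add (p : ℝ) (f g : (Fin n → Bool) → ℝ) :
    Ep p (fun x => f x + g x) = Ep p f + Ep p g := by
  simp only [Ep, mul_add, sum_add_distrib]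

lemma Ep_sum {ι : Type*} (p : ℝ) (s : Finset ι) (f : ι → (Fin n → Bool) → ℝ) :
    Ep p (fun x => ∑ j ∈ s, f j x) = ∑ j ∈ s, Ep p (f j) := by
  simp only [Ep, mul_sum]
  exact sum_comm

lemma Ep_mono {p : ℝ} (hp₀ : 0 ≤ p) (hp₁ : p ≤ 1) {f g : (Fin n → Bool) → ℝ}
    (h : ∀ x, f x ≤ g x) : Ep p f ≤ Ep p g := by
  refine sum_le_sum fun x _ => mul_le_mul_of_nonneg_left (h x) (prod_nonneg fun i _ => ?_)
  split_ifs <;> linarith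

lemma Ep_nonneg {p : ℝ} (hp₀ : 0 ≤ p) (hp₁ : p ≤ 1) {f : (Fin n → Bool) → ℝ}
    (h : ∀ x, 0 ≤ f x) : 0 ≤ Ep p f := by
  simpa [Ep] using Ep_mono hp₀ hp₁ (f := fun _ => 0) h

lemma Ep_prod (p : ℝ) (g : Fin n → Bool → ℝ) :
    Ep p (fun x => ∏ i, g i (x i)) = ∏ i, (p * g i true + (1 - p) * g i false) := by
  simp only [Ep, ← prod_mul_distrib]
  rw [← Fintype.prod_sum fun i b => (if b then p else 1 - p) * g i b]
  simp

lemma Ep_const (p c : ℝ) : Ep p (fun _ : Fin n → Bool => c) = c := by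
  have hone : Ep p (fun _ : Fin n → Bool => 1) = 1 := by
    simpa using Ep_prod p fun (_ : Fin n) _ => 1
  simpa [hone] using Ep_const_mul p c fun _ : Fin n → Bool => 1

lemma Ep_eq_Ep_update (p : ℝ) (i : Fin n) (f : (Fin n → Bool) → ℝ) :
    Ep p f = Ep p fun x =>
      p * f (Function.update x i true) + (1 - p) * f (Function.update x i false) := by
  let e := (Equiv.funSplitAt i Bool).symm
  have weight (b : Bool) (y : {j // j ≠ i} → Bool) :
      (∏ j, if e (b, y) j then p else 1 - p) =
        (if b then p else 1 - p) * ∏ j, if y j then p else 1 - p := by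
    rw [Fintype.prod_eq_mul_prod_subtype_ne _ i]
    have hself : e (b, y) i = b := by simp [e, Equiv.funSplitAt, Equiv.piSplitAt]
    have hne (j : {j // j ≠ i}) : e (b, y) j = y j := by
      simp [e, Equiv.funSplitAt, Equiv.piSplitAt, j.2]
    simp only [hself, hne]
  have update_apply (b c : Bool) (y : {j // j ≠ i} → Bool) :
      Function.update (e (b, y)) i c = e (c, y) := by
    ext j
    obtain rfl | hj := eq_or_ne j i <;> simp [e, Equiv.funSplitAt, Equiv.piSplitAt, *]
  simp only [Ep, ← e.sum_comp, Fintype.sum_prod_type_right, weight, update_apply,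
    Fintype.sum_bool, if_true, Bool.false_eq_true, if_false]
  exact sum_congr rfl fun y _ => by ring

end Expectation

section Fourier

/-- The `p`-biased character `χ_i` of a single coordinate, as a function of the value of that
coordinate; `chi p S` is a product of these. -/
noncomputable def coordChar (p : ℝ) (b : Bool) : ℝ :=
  ((if b then 1 else 0) - p) / √(p * (1 - p))

lemma chi_eq_prod_coordChar (p : ℝ) (S : Finset (Fin n)) (x : Fin n → Bool) :
    chi p S x = ∏ i ∈ S, coordChar p (x i) := rfl

lemma coordChar_mean (p : ℝ) : p * coordChar p true + (1 - p) * coordChar p false = 0 := by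
  simp only [coordChar, if_true, Bool.false_eq_true, if_false]
  ring

/-- The skewness `𝔼 χ_i³ = (1 - 2p) / σ` of a single `p`-biased coordinate. -/
noncomputable def skewness (p : ℝ) : ℝ := (1 - 2 * p) / √(p * (1 - p))

variable {p : ℝ}

lemma mul_one_sub_pos (hp₀ : 0 < p) (hp₁ : p < 1) : 0 < p * (1 - p) :=
  mul_pos hp₀ (sub_pos.2 hp₁)

lemma coordChar_sq (hp₀ : 0 < p) (hp₁ : p < 1) (b : Bool) :
    coordChar p b ^ 2 = 1 + skewness p * coordChar p b := by
  have hσ := mul_one_sub_pos hp₀ hp₁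
  have hq : 1 - p ≠ 0 := (sub_pos.2 hp₁).ne'
  simp only [coordChar, skewness, div_pow, div_mul_div_comm, ← sq, Real.sq_sqrt hσ.le]
  field_simp
  cases b <;> norm_num <;> ring

lemma skewness_sq (hp₀ : 0 < p) (hp₁ : p < 1) :
    skewness p ^ 2 = (p * (1 - p))⁻¹ - 4 := by
  have hσ := mul_one_sub_pos hp₀ hp₁
  have hq : 1 - p ≠ 0 := (sub_pos.2 hp₁).ne'
  rw [skewness, div_pow, Real.sq_sqrt hσ.le]
  field_simp
  ring

lemma coordChar_second_moment (hp₀ : 0 < p) (hp₁ : p < 1) :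
    p * coordChar p true ^ 2 + (1 - p) * coordChar p false ^ 2 = 1 := by
  rw [coordChar_sq hp₀ hp₁, coordChar_sq hp₀ hp₁]
  linear_combination skewness p * coordChar_mean p

lemma Ep_chi_mul_chi (hp₀ : 0 < p) (hp₁ : p < 1) (S T : Finset (Fin n)) :
    Ep p (fun x => chi p S x * chi p T x) = if S = T then 1 else 0 := by
  let factor (i : Fin n) (b : Bool) : ℝ :=
    (if i ∈ S then coordChar p b else 1) * if i ∈ T then coordChar p b else 1
  have chi_mul_chi (x : Fin n → Bool) : chi p S x * chi p T x = ∏ i, factor i (x i) := by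
    simp only [chi_eq_prod_coordChar, factor, prod_mul_distrib, prod_ite_mem, univ_inter]
  have factor_mean (i : Fin n) : p * factor i true + (1 - p) * factor i false =
      if (i ∈ S ↔ i ∈ T) then 1 else 0 := by
    by_cases hS : i ∈ S <;> by_cases hT : i ∈ T <;>
      simp [factor, hS, hT, ← sq, coordChar_mean, coordChar_second_moment hp₀ hp₁]
  simp only [chi_mul_chi, Ep_prod, factor_mean, Fintype.prod_ite_zero, prod_const_one,
    Finset.ext_iff]

lemma sum_coeff_mul_chi (hp₀ : 0 < p) (hp₁ : p < 1) (f : (Fin n → Bool) → ℝ)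
    (x : Fin n → Bool) : ∑ S, coeff p f S * chi p S x = f x := by
  let weight (y : Fin n → Bool) : ℝ := ∏ i, if y i then p else 1 - p
  let A : Matrix (Finset (Fin n)) (Fin n → Bool) ℝ := .of fun S y => weight y * chi p S y
  let B : Matrix (Fin n → Bool) (Finset (Fin n)) ℝ := .of fun y S => chi p S y
  have orthonormal : A * B = 1 := by
    ext S T
    simpa [A, B, Matrix.mul_apply, Matrix.one_apply, Ep, mul_assoc] using
      Ep_chi_mul_chi hp₀ hp₁ S T
  -- The characters are as many as the points of the cube, so orthonormality implies completeness.
  have complete : B * A = 1 := (Matrix.mul_eq_one_comm_of_card_eq _ _ _ (by simp)).1 orthonormal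
  have expansion : B.mulVec (A.mulVec f) = f := by
    rw [Matrix.mulVec_mulVec, complete, Matrix.one_mulVec]
  calc ∑ S, coeff p f S * chi p S x = B.mulVec (A.mulVec f) x := by
        refine sum_congr rfl fun S _ => ?_
        rw [mul_comm]
        simp [A, B, coeff, Ep, Matrix.mulVec, dotProduct, weight, mul_assoc, mul_comm (f _)]
    _ = f x := congrFun expansion x

lemma coeff_sum_mul_chi (hp₀ : 0 < p) (hp₁ : p < 1) (α : Finset (Fin n) → ℝ)
    (S : Finset (Fin n)) : coeff p (fun x => ∑ T, α T * chi p T x) S = α S := by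
  simp only [coeff, sum_mul, mul_assoc, Ep_sum, Ep_const_mul, Ep_chi_mul_chi hp₀ hp₁]
  simp

lemma sum_coeff_sq (hp₀ : 0 < p) (hp₁ : p < 1) (f : (Fin n → Bool) → ℝ) :
    ∑ S, coeff p f S ^ 2 = Ep p fun x => f x ^ 2 := by
  have hexp (x : Fin n → Bool) : f x ^ 2 = ∑ S, coeff p f S * (f x * chi p S x) := by
    rw [sq]
    nth_rewrite 2 [← sum_coeff_mul_chi hp₀ hp₁ f x]
    simp only [mul_sum, mul_left_comm]
  simp only [hexp, Ep_sum, Ep_const_mul]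
  exact sum_congr rfl fun S _ => sq (coeff p f S)

lemma coeff_noise (hp₀ : 0 < p) (hp₁ : p < 1) (ρ : ℝ) (f : (Fin n → Bool) → ℝ)
    (S : Finset (Fin n)) : coeff p (noise p ρ f) S = ρ ^ S.card * coeff p f S :=
  coeff_sum_mul_chi hp₀ hp₁ (fun T => ρ ^ T.card * coeff p f T) S

lemma noise_noise_of_mul_eq_one (hp₀ : 0 < p) (hp₁ : p < 1) {ρ τ : ℝ} (h : ρ * τ = 1)
    (f : (Fin n → Bool) → ℝ) : noise p ρ (noise p τ f) = f := by
  ext x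
  simp only [noise.eq_def p ρ, coeff_noise hp₀ hp₁, ← mul_assoc, ← mul_pow, h, one_pow, one_mul,
    sum_coeff_mul_chi hp₀ hp₁]

end Fourier

section NoisyPolynomials

/-- The noise operator `T_ρ` applied to the polynomial `∑_{S ⊆ A} α_S χ_S`, for arbitrary
coefficients `α`. Restricting the variables to `A` allows an induction on `A`. -/
noncomputable def noisyPoly (p ρ : ℝ) (A : Finset (Fin n)) (α : Finset (Fin n) → ℝ)
    (x : Fin n → Bool) : ℝ :=
  ∑ S ∈ A.powerset, ρ ^ S.card * α S * chi p S x

/-- The weight `∑_{S ⊆ T ⊆ A} α_T²` above `S` of the polynomial `∑_{T ⊆ A} α_T χ_T`; when `α` is the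
Fourier transform of `f` and `A` is everything, it is `σ^{2|S|} I_S(f)`. -/
def weightAbove (A : Finset (Fin n)) (α : Finset (Fin n) → ℝ) (S : Finset (Fin n)) : ℝ :=
  ∑ T ∈ A.powerset with S ⊆ T, α T ^ 2

variable {A S : Finset (Fin n)} {i : Fin n}

lemma noisyPoly_insert (p ρ : ℝ) (hi : i ∉ A) (α : Finset (Fin n) → ℝ) (x : Fin n → Bool) :
    noisyPoly p ρ (insert i A) α x =
      noisyPoly p ρ A α x +
        ρ * coordChar p (x i) * noisyPoly p ρ A (fun S => α (insert i S)) x := by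
  simp only [noisyPoly, sum_powerset_insert hi, mul_sum]
  congr 1
  refine sum_congr rfl fun S hS => ?_
  have hiS : i ∉ S := fun h => hi (mem_powerset.1 hS h)
  rw [chi_eq_prod_coordChar, chi_eq_prod_coordChar, prod_insert hiS, card_insert_of_notMem hiS]
  ring

lemma noisyPoly_update (p ρ : ℝ) (hi : i ∉ A) (α : Finset (Fin n) → ℝ) (x : Fin n → Bool)
    (b : Bool) : noisyPoly p ρ A α (Function.update x i b) = noisyPoly p ρ A α x := by
  refine sum_congr rfl fun S hS => congrArg _ (prod_congr rfl fun j hj => ?_)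
  rw [Function.update_of_ne (ne_of_mem_of_not_mem (mem_powerset.1 hS hj) hi)]

lemma weightAbove_nonneg (A : Finset (Fin n)) (α : Finset (Fin n) → ℝ) (S : Finset (Fin n)) :
    0 ≤ weightAbove A α S :=
  sum_nonneg fun _ _ => sq_nonneg _

lemma weightAbove_insert_of_subset (hi : i ∉ A) (hS : S ⊆ A) (α : Finset (Fin n) → ℝ) :
    weightAbove (insert i A) α S =
      weightAbove A α S + weightAbove A (fun T => α (insert i T)) S := by
  simp only [weightAbove, sum_filter, sum_powerset_insert hi,
    subset_insert_iff_of_notMem (notMem_mono hS hi)]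

lemma weightAbove_insert_insert (hi : i ∉ A) (hS : S ⊆ A) (α : Finset (Fin n) → ℝ) :
    weightAbove (insert i A) α (insert i S) = weightAbove A (fun T => α (insert i T)) S := by
  have hzero : ∑ T ∈ A.powerset, (if insert i S ⊆ T then α T ^ 2 else 0) = 0 :=
    sum_eq_zero fun T hT => if_neg fun h => hi (mem_powerset.1 hT (h (mem_insert_self i S)))
  simp only [weightAbove, sum_filter, sum_powerset_insert hi, hzero, zero_add,
    insert_subset_insert_iff (notMem_mono hS hi)]

lemma sum_powerset_insert_weightAbove_mul (hi : i ∉ A) (κ : ℝ) (α β : Finset (Fin n) → ℝ) :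
    ∑ S ∈ (insert i A).powerset,
        κ ^ S.card * (weightAbove (insert i A) α S * weightAbove (insert i A) β S) =
      ∑ S ∈ A.powerset,
        (κ ^ S.card *
            ((weightAbove A α S + weightAbove A (fun T => α (insert i T)) S) *
              (weightAbove A β S + weightAbove A (fun T => β (insert i T)) S)) +
          κ ^ (S.card + 1) *
            (weightAbove A (fun T => α (insert i T)) S *
              weightAbove A (fun T => β (insert i T)) S)) := by
  rw [sum_powerset_insert hi, ← sum_add_distrib]
  refine sum_congr rfl fun S hS => ?_
  have hSA := mem_powerset.1 hS
  rw [weightAbove_insert_of_subset hi hSA, weightAbove_insert_of_subset hi hSA,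
    weightAbove_insert_insert hi hSA, weightAbove_insert_insert hi hSA,
    card_insert_of_notMem (notMem_mono hSA hi)]

end NoisyPolynomials

section Hypercontractivity

variable {p : ℝ}

lemma two_point_inequality (hp₀ : 0 < p) (hp₁ : p < 1) (a b c d : ℝ) :
    p * ((a + 1 / 2 * coordChar p true * b) ^ 2 * (c + 1 / 2 * coordChar p true * d) ^ 2) +
        (1 - p) *
          ((a + 1 / 2 * coordChar p false * b) ^ 2 * (c + 1 / 2 * coordChar p false * d) ^ 2) ≤
      a ^ 2 * c ^ 2 + a ^ 2 * d ^ 2 + b ^ 2 * c ^ 2 + (p * (1 - p))⁻¹ * (b ^ 2 * d ^ 2) := by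
  set γ := skewness p
  have hγ : (p * (1 - p))⁻¹ = γ ^ 2 + 4 := by rw [skewness_sq hp₀ hp₁]; ring
  have linearise (e f : ℝ) (t : Bool) : (e + 1 / 2 * coordChar p t * f) ^ 2 =
      (e ^ 2 + f ^ 2 / 4) + (e * f + γ * f ^ 2 / 4) * coordChar p t := by
    linear_combination f ^ 2 / 4 * coordChar_sq hp₀ hp₁ t
  have moments : p * ((a + 1 / 2 * coordChar p true * b) ^ 2 *
        (c + 1 / 2 * coordChar p true * d) ^ 2) + (1 - p) *
        ((a + 1 / 2 * coordChar p false * b) ^ 2 * (c + 1 / 2 * coordChar p false * d) ^ 2) =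
      (a ^ 2 + b ^ 2 / 4) * (c ^ 2 + d ^ 2 / 4) +
        (a * b + γ * b ^ 2 / 4) * (c * d + γ * d ^ 2 / 4) := by
    simp only [linearise]
    linear_combination
      ((a ^ 2 + b ^ 2 / 4) * (c * d + γ * d ^ 2 / 4) +
        (c ^ 2 + d ^ 2 / 4) * (a * b + γ * b ^ 2 / 4)) * coordChar_mean p +
      (a * b + γ * b ^ 2 / 4) * (c * d + γ * d ^ 2 / 4) * coordChar_second_moment hp₀ hp₁
  have mixed : (a * b + γ * b ^ 2 / 4) * (c * d + γ * d ^ 2 / 4) ≤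
      5 / 8 * ((a * d) ^ 2 + (b * c) ^ 2) + 5 / 16 * (γ * (b * d)) ^ 2 := by
    -- AM-GM on the pairs among `a d`, `b c` and `γ b d`.
    linear_combination 1 / 2 * sq_nonneg (a * d - b * c) +
      1 / 8 * sq_nonneg (a * d - γ * (b * d)) + 1 / 8 * sq_nonneg (b * c - γ * (b * d))
  rw [moments, hγ]
  linear_combination mixed + 1 / 8 * sq_nonneg (a * d) + 1 / 8 * sq_nonneg (b * c) +
    63 / 16 * sq_nonneg (b * d) + 11 / 16 * sq_nonneg (γ * (b * d))

theorem Ep_noisyPoly_sq_mul_sq_le (hp₀ : 0 < p) (hp₁ : p < 1) (A : Finset (Fin n))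
    (α β : Finset (Fin n) → ℝ) :
    Ep p (fun x => noisyPoly p (1 / 2) A α x ^ 2 * noisyPoly p (1 / 2) A β x ^ 2) ≤
      ∑ S ∈ A.powerset,
        (p * (1 - p))⁻¹ ^ S.card * (weightAbove A α S * weightAbove A β S) := by
  induction A using Finset.induction_on generalizing α β with
  | empty => simp [noisyPoly, weightAbove, chi, Ep_const, filter_singleton]
  | insert i A hi ih =>
    set κ := (p * (1 - p))⁻¹
    have hκ : 0 ≤ κ := (inv_pos.2 (mul_one_sub_pos hp₀ hp₁)).le
    let α' : Finset (Fin n) → ℝ := fun S => α (insert i S)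
    let β' : Finset (Fin n) → ℝ := fun S => β (insert i S)
    let P := noisyPoly p (1 / 2) A
    let W := weightAbove A
    calc Ep p (fun x => noisyPoly p (1 / 2) (insert i A) α x ^ 2 *
          noisyPoly p (1 / 2) (insert i A) β x ^ 2)
      _ ≤ Ep p (fun x => P α x ^ 2 * P β x ^ 2 + P α x ^ 2 * P β' x ^ 2 +
            P α' x ^ 2 * P β x ^ 2 + κ * (P α' x ^ 2 * P β' x ^ 2)) := by
          rw [Ep_eq_Ep_update p i]
          refine Ep_mono hp₀.le hp₁.le fun x => ?_
          simp only [noisyPoly_insert p _ hi, noisyPoly_update p _ hi, Function.update_self]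
          exact two_point_inequality hp₀ hp₁ _ _ _ _
      _ ≤ ∑ S ∈ A.powerset, κ ^ S.card * (W α S * W β S) +
            ∑ S ∈ A.powerset, κ ^ S.card * (W α S * W β' S) +
            ∑ S ∈ A.powerset, κ ^ S.card * (W α' S * W β S) +
            κ * ∑ S ∈ A.powerset, κ ^ S.card * (W α' S * W β' S) := by
          simp only [Ep_add, Ep_const_mul]
          gcongr <;> apply ih
      _ ≤ ∑ S ∈ (insert i A).powerset,
            κ ^ S.card * (weightAbove (insert i A) α S * weightAbove (insert i A) β S) := by
          rw [sum_powerset_insert_weightAbove_mul hi]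
          simp only [mul_sum, ← sum_add_distrib]
          refine sum_le_sum fun S _ => ?_
          have hdrop : 0 ≤ κ ^ S.card * (W α' S * W β' S) :=
            mul_nonneg (pow_nonneg hκ _)
              (mul_nonneg (weightAbove_nonneg A α' S) (weightAbove_nonneg A β' S))
          linear_combination hdrop

theorem Ep_noise_half_pow_four_le (hp₀ : 0 < p) (hp₁ : p < 1) (f : (Fin n → Bool) → ℝ) :
    Ep p (fun x => noise p (1 / 2) f x ^ 4) ≤
      ∑ S, (p * (1 - p)) ^ S.card * genInf p S f ^ 2 := by
  have hσ := mul_one_sub_pos hp₀ hp₁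
  have hpoly (x : Fin n → Bool) :
      noise p (1 / 2) f x ^ 4 = noisyPoly p (1 / 2) univ (coeff p f) x ^ 2 *
        noisyPoly p (1 / 2) univ (coeff p f) x ^ 2 := by
    rw [noise, noisyPoly, powerset_univ]
    ring
  simp only [hpoly]
  refine (Ep_noisyPoly_sq_mul_sq_le hp₀ hp₁ univ _ _).trans_eq ?_
  rw [powerset_univ]
  refine sum_congr rfl fun S _ => ?_
  rw [genInf, weightAbove, powerset_univ, inv_pow]
  field_simp

end Hypercontractivity

section InfluencesAndNorms

variable {p : ℝ}

lemma genInf_nonneg (hp₀ : 0 ≤ p) (hp₁ : p ≤ 1) (S : Finset (Fin n))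
    (f : (Fin n → Bool) → ℝ) : 0 ≤ genInf p S f :=
  div_nonneg (sum_nonneg fun _ _ => sq_nonneg _)
    (pow_nonneg (mul_nonneg hp₀ (sub_nonneg.2 hp₁)) _)

lemma sum_pow_mul_genInf_eq (hp₀ : 0 < p) (hp₁ : p < 1) (f : (Fin n → Bool) → ℝ) :
    ∑ S, (p * (1 - p)) ^ S.card * genInf p S f = ∑ T, 2 ^ T.card * coeff p f T ^ 2 := by
  have := mul_one_sub_pos hp₀ hp₁
  have hterm (S : Finset (Fin n)) : (p * (1 - p)) ^ S.card * genInf p S f =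
      ∑ T, if S ⊆ T then coeff p f T ^ 2 else 0 := by
    rw [genInf, mul_div_cancel₀ _ (by positivity), sum_filter]
  simp only [hterm]
  rw [sum_comm]
  refine sum_congr rfl fun T _ => ?_
  rw [← sum_filter, sum_const, filter_subset_univ, card_powerset, nsmul_eq_mul]
  norm_cast

lemma pnorm_natCast_of_even (p : ℝ) {k : ℕ} (hk : Even k) (f : (Fin n → Bool) → ℝ) :
    pnorm p k f = Ep p (fun x => f x ^ k) ^ (1 / k : ℝ) := by
  simp only [pnorm, Real.rpow_natCast, hk.pow_abs]

lemma pnorm_nonneg (hp₀ : 0 ≤ p) (hp₁ : p ≤ 1) (r : ℝ) (f : (Fin n → Bool) → ℝ) :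
    0 ≤ pnorm p r f :=
  Real.rpow_nonneg (Ep_nonneg hp₀ hp₁ fun _ => by positivity) _

end InfluencesAndNorms

section LowDegree

variable {p δ : ℝ} {r : ℕ} {f : (Fin n → Bool) → ℝ}

lemma genInf_eq_zero_of_lt_card (hdeg : ∀ S, r < S.card → coeff p f S = 0)
    {S : Finset (Fin n)} (hS : r < S.card) : genInf p S f = 0 := by
  rw [genInf, sum_eq_zero, zero_div]
  intro T hT
  rw [hdeg T (hS.trans_le (card_le_card (mem_filter.1 hT).2)), zero_pow two_ne_zero]

lemma genInf_noise_le (hp₀ : 0 < p) (hp₁ : p < 1) {ρ : ℝ} (hρ : 1 ≤ ρ)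
    (hdeg : ∀ S, r < S.card → coeff p f S = 0) (S : Finset (Fin n)) :
    genInf p S (noise p ρ f) ≤ ρ ^ (2 * r) * genInf p S f := by
  have := mul_one_sub_pos hp₀ hp₁
  rw [genInf, genInf, ← mul_div_assoc, mul_sum]
  gcongr with T
  obtain hT | hT := lt_or_ge r T.card
  · simp [coeff_noise hp₀ hp₁, hdeg T hT]
  · rw [coeff_noise hp₀ hp₁, mul_pow, ← pow_mul, mul_comm T.card]
    gcongr

lemma sum_pow_mul_genInf_le (hp₀ : 0 < p) (hp₁ : p < 1) (hdeg : ∀ S, r < S.card → coeff p f S = 0) :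
    ∑ S, (p * (1 - p)) ^ S.card * genInf p S f ≤ 2 ^ r * Ep p fun x => f x ^ 2 := by
  rw [sum_pow_mul_genInf_eq hp₀ hp₁, ← sum_coeff_sq hp₀ hp₁, mul_sum]
  refine sum_le_sum fun T _ => ?_
  obtain hT | hT := lt_or_ge r T.card
  · simp [hdeg T hT]
  · gcongr
    exact one_le_two

theorem Ep_pow_four_le (hp₀ : 0 < p) (hp₁ : p < 1)
    (hdeg : ∀ S, r < S.card → coeff p f S = 0) (hinf : ∀ S, S.card ≤ r → genInf p S f ≤ δ) :
    Ep p (fun x => f x ^ 4) ≤ 32 ^ r * δ * Ep p fun x => f x ^ 2 := by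
  have := mul_one_sub_pos hp₀ hp₁
  have hδ : 0 ≤ δ := (genInf_nonneg hp₀.le hp₁.le ∅ f).trans (hinf ∅ (by simp))
  have hinf' (S : Finset (Fin n)) : genInf p S f ≤ δ := by
    obtain hS | hS := lt_or_ge r S.card
    · exact (genInf_eq_zero_of_lt_card hdeg hS).trans_le hδ
    · exact hinf S hS
  have hterm (S : Finset (Fin n)) : genInf p S (noise p 2 f) ^ 2 ≤ 16 ^ r * δ * genInf p S f := by
    have hnonneg := genInf_nonneg hp₀.le hp₁.le S
    calc genInf p S (noise p 2 f) ^ 2 ≤ (2 ^ (2 * r) * genInf p S f) ^ 2 :=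
          pow_le_pow_left₀ (hnonneg _) (genInf_noise_le hp₀ hp₁ one_le_two hdeg S) 2
      _ = 16 ^ r * genInf p S f * genInf p S f := by
          rw [mul_pow, ← pow_mul, mul_right_comm, pow_mul]; norm_num; ring
      _ ≤ 16 ^ r * δ * genInf p S f := by
          gcongr
          exacts [hnonneg f, hinf' S]
  calc Ep p (fun x => f x ^ 4) = Ep p (fun x => noise p (1 / 2) (noise p 2 f) x ^ 4) := by
        rw [noise_noise_of_mul_eq_one hp₀ hp₁ (by norm_num)]
    _ ≤ ∑ S, (p * (1 - p)) ^ S.card * genInf p S (noise p 2 f) ^ 2 :=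
        Ep_noise_half_pow_four_le hp₀ hp₁ _
    _ ≤ ∑ S, (p * (1 - p)) ^ S.card * (16 ^ r * δ * genInf p S f) := by
        gcongr with S
        exact hterm S
    _ = 16 ^ r * δ * ∑ S, (p * (1 - p)) ^ S.card * genInf p S f := by
        simp only [mul_sum, mul_left_comm]
    _ ≤ 16 ^ r * δ * (2 ^ r * Ep p fun x => f x ^ 2) := by
        gcongr
        exact sum_pow_mul_genInf_le hp₀ hp₁ hdeg
    _ = 32 ^ r * δ * Ep p fun x => f x ^ 2 := by
        rw [show (32 : ℝ) = 16 * 2 by norm_num, mul_pow]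
        ring

lemma two_rpow_five_mul_le_five_rpow_three_mul {t : ℝ} (ht : 0 ≤ t) :
    (2 : ℝ) ^ (5 * t) ≤ 5 ^ (3 * t) := by
  rw [Real.rpow_mul two_pos.le, Real.rpow_mul (by norm_num)]
  gcongr
  norm_num

end LowDegree

theorem statement3_general {n : ℕ} (p δ : ℝ) (r : ℕ) (hp₀ : 0 < p) (hp₁ : p < 1)
    (f : (Fin n → Bool) → ℝ)
    (hdeg : ∀ S : Finset (Fin n), r < S.card → coeff p f S = 0)
    (hinf : ∀ S : Finset (Fin n), S.card ≤ r → genInf p S f ≤ δ) :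
    pnorm p 4 f ≤
      (2 : ℝ) ^ (5 * (r : ℝ) / 4) * δ ^ ((1 : ℝ) / 4) * pnorm p 2 f ^ ((1 : ℝ) / 2) := by
  have hδ : 0 ≤ δ := (genInf_nonneg hp₀.le hp₁.le ∅ f).trans (hinf ∅ (by simp))
  have hE₂ : 0 ≤ Ep p (fun x => f x ^ 2) := Ep_nonneg hp₀.le hp₁.le fun x => by positivity
  have hE₄ : 0 ≤ Ep p (fun x => f x ^ 4) := Ep_nonneg hp₀.le hp₁.le fun x => by positivity
  have hpnorm₄ : pnorm p 4 f = Ep p (fun x => f x ^ 4) ^ (1 / 4 : ℝ) := by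
    exact_mod_cast pnorm_natCast_of_even p (k := 4) (by decide) f
  have hpnorm₂ : pnorm p 2 f ^ (1 / 2 : ℝ) = Ep p (fun x => f x ^ 2) ^ (1 / 4 : ℝ) := by
    have := pnorm_natCast_of_even p (k := 2) even_two f
    push_cast at this
    rw [this, ← Real.rpow_mul hE₂]
    norm_num
  have hconst : ((32 : ℝ) ^ r) ^ (1 / 4 : ℝ) = 2 ^ (5 * (r : ℝ) / 4) := by
    rw [show (32 : ℝ) = 2 ^ (5 : ℝ) by norm_num, ← Real.rpow_mul_natCast (by norm_num),
      ← Real.rpow_mul (by norm_num)]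
    ring_nf
  calc pnorm p 4 f ≤ (32 ^ r * δ * Ep p fun x => f x ^ 2) ^ (1 / 4 : ℝ) := by
        rw [hpnorm₄]
        gcongr
        exact Ep_pow_four_le hp₀ hp₁ hdeg hinf
    _ = (2 : ℝ) ^ (5 * (r : ℝ) / 4) * δ ^ (1 / 4 : ℝ) * pnorm p 2 f ^ (1 / 2 : ℝ) := by
        rw [Real.mul_rpow (by positivity) hE₂, Real.mul_rpow (by positivity) hδ, hconst, hpnorm₂]

/-- hypercontractivity for low-degree functions with small generalised
influences. -/
theorem statement3 {n : ℕ} (p δ : ℝ) (r : ℕ) (hp : 0 < p) (hp' : p ≤ 1/2) (hδ : 0 < δ)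
    (f : (Fin n → Bool) → ℝ)
    (hdeg : ∀ S : Finset (Fin n), r < S.card → coeff p f S = 0)
    (hinf : ∀ S : Finset (Fin n), S.card ≤ r → genInf p S f ≤ δ) :
    pnorm p 4 f ≤
      (5 : ℝ) ^ (3 * (r : ℝ) / 4) * δ ^ ((1 : ℝ)/4) * pnorm p 2 f ^ ((1 : ℝ)/2) := by
  have hp₁ : p < 1 := by linarith
  refine (statement3_general p δ r hp hp₁ f hdeg hinf).trans ?_
  have := pnorm_nonneg hp.le hp₁.le 2 f
  gcongr
  simpa only [mul_div_assoc] using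
    two_rpow_five_mul_le_five_rpow_three_mul (t := r / 4) (by positivity)

end GlobalHC
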